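/- arXiv:math/0405222 — 2 statements merged into one kernel-verified Lean document; each statement's English description precedes it below -/
import Mathlib

section
/- For every θ > 0 and every ω ∈ ℂ with Re(ω) > 0, the Laplace transform of s ↦ Π(θ·s, s) satisfies ∫_0^∞ e^{−ω s}·Π(θ s, s) ds = Π̂(θ, ω), where Π̂(θ, ω) := ∫_0^1 α x^{α−1} [ (ω + xθ + x) · ∫_0^1 ((ω + xθ)/(ω + xθ + y))·α y^{α−1} dy ]^{−1} dx. -/
open MeasureTheory

namespace RemTrap

lemma dist_low {z : ℂ} {u : ℝ} (hu : u ∈ Set.Icc (0:ℝ) 1) :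
    ‖z - 1/2‖ - 1/2 ≤ ‖z - u‖ := by
  have h1 : ‖((u:ℂ) - 1/2)‖ ≤ 1/2 := by
    have : ((u:ℂ) - 1/2) = ((u - 1/2 : ℝ) : ℂ) := by push_cast; ring
    rw [this, Complex.norm_real, Real.norm_eq_abs, abs_le]
    constructor <;> linarith [hu.1, hu.2]
  have h2 : z - 1/2 = (z - u) + (u - 1/2) := by ring
  have h3 := norm_add_le (z - u) ((u:ℂ) - 1/2)
  rw [← h2] at h3
  linarith

lemma dist_up {z : ℂ} {u : ℝ} (hu : u ∈ Set.Icc (0:ℝ) 1) :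
    ‖z - u‖ ≤ ‖z - 1/2‖ + 1/2 := by
  have h1 : ‖((u:ℂ) - 1/2)‖ ≤ 1/2 := by
    have : ((u:ℂ) - 1/2) = ((u - 1/2 : ℝ) : ℂ) := by push_cast; ring
    rw [this, Complex.norm_real, Real.norm_eq_abs, abs_le]
    constructor <;> linarith [hu.1, hu.2]
  have h2 : z - u = (z - 1/2) - (u - 1/2) := by ring
  have h3 := norm_sub_le (z - 1/2) ((u:ℂ) - 1/2)
  rw [← h2] at h3
  linarith

lemma norm_low (z : ℂ) : ‖z - 1/2‖ - 1/2 ≤ ‖z‖ := by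
  have := dist_low (z := z) (u := 0) (by simp)
  simpa using this

lemma norm_inv_le {z : ℂ} (hz : 1/2 < ‖z - 1/2‖) {u : ℝ} (hu : u ∈ Set.Icc (0:ℝ) 1) :
    ‖1 / (z - u)‖ ≤ 1 / (‖z - 1/2‖ - 1/2) := by
  rw [norm_div, norm_one]
  exact one_div_le_one_div_of_le (by linarith) (dist_low hu)

lemma sub_ne {z : ℂ} (hz : 1/2 < ‖z - 1/2‖) {u : ℝ} (hu : u ∈ Set.Icc (0:ℝ) 1) :
    z - u ≠ 0 := by
  have := dist_low (z := z) hu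
  rw [← norm_pos_iff]; linarith

lemma re_low {z : ℂ} (hz : 1/2 < ‖z - 1/2‖) {u : ℝ} (hu : u ∈ Set.Icc (0:ℝ) 1) :
    ‖z - 1/2‖ * (‖z - 1/2‖ - 1/2) / (‖z - 1/2‖ + 1/2)^2 ≤ ((z - 1/2) * (1 / (z - u))).re := by
  have hne := sub_ne hz hu
  have hup := dist_up (z := z) hu
  set d := ‖z - 1/2‖ with hd
  have hpos : 0 < ‖z - u‖ := norm_pos_iff.2 hne
  have e1 : ((z - 1/2) * (1 / (z - u))).re =
      (d^2 - (u - 1/2) * (z - 1/2).re) / ‖z - u‖^2 := by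
    rw [hd, ← Complex.normSq_eq_norm_sq, ← Complex.normSq_eq_norm_sq, mul_one_div, Complex.div_re,
      ← add_div]
    congr 1
    simp [Complex.normSq_apply]
    ring
  rw [e1]
  have h2 : |(z - 1/2).re| ≤ d := Complex.abs_re_le_norm _
  have h3 : (u - 1/2) * (z - 1/2).re ≤ 1/2 * d := by
    refine (le_abs_self _).trans ?_
    rw [abs_mul]
    have : |u - 1/2| ≤ 1/2 := by rw [abs_le]; constructor <;> linarith [hu.1, hu.2]
    exact mul_le_mul this h2 (abs_nonneg _) (by norm_num)
  have hd0 : 0 < d := by linarith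
  have h4 : 0 ≤ d * (d - 1/2) := mul_nonneg hd0.le (by linarith)
  apply div_le_div₀
  · linarith
  · linarith
  · positivity
  · gcongr

variable {μ : Measure ℝ} [IsProbabilityMeasure μ]

lemma integrable_cauchy (hμ : ∀ᵐ u ∂μ, u ∈ Set.Icc (0:ℝ) 1) {φ : ℝ → ℂ} (hφ : Measurable φ)
    (hb : ∀ u ∈ Set.Icc (0:ℝ) 1, ‖φ u‖ ≤ 1) {z : ℂ} (hz : 1/2 < ‖z - 1/2‖) :
    Integrable (fun u : ℝ => φ u / (z - u)) μ := by
  refine Integrable.of_bound (C := 1 / (‖z - 1/2‖ - 1/2)) ?_ ?_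
  · exact (by fun_prop : Measurable (fun u : ℝ => φ u / (z - u))).aestronglyMeasurable
  · filter_upwards [hμ] with u hu
    have h1 := norm_inv_le hz hu
    have h2 := hb u hu
    rw [div_eq_mul_one_div, norm_mul]
    calc _ ≤ 1 * ‖1 / (z - u)‖ := by gcongr
      _ ≤ _ := by rw [one_mul]; exact h1

lemma g_low (hμ : ∀ᵐ u ∂μ, u ∈ Set.Icc (0:ℝ) 1) {z : ℂ} (hz : 1/2 < ‖z - 1/2‖) :
    (‖z - 1/2‖ - 1/2) / (‖z - 1/2‖ + 1/2)^2 ≤ ‖∫ u : ℝ, 1 / (z - u) ∂μ‖ := by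
  have hint : Integrable (fun u : ℝ => 1 / (z - u)) μ :=
    integrable_cauchy hμ (φ := fun _ => 1) measurable_const (by simp) hz
  have hint2 : Integrable (fun u : ℝ => (z - 1/2) * (1 / (z - u))) μ := hint.const_mul _
  have h1 : ‖z - 1/2‖ * (‖z - 1/2‖ - 1/2) / (‖z - 1/2‖ + 1/2)^2 ≤
      ((z - 1/2) * ∫ u : ℝ, 1 / (z - u) ∂μ).re := by
    rw [← integral_const_mul]
    have : (∫ u : ℝ, (z - 1/2) * (1 / (z - u)) ∂μ).re =
        ∫ u : ℝ, ((z - 1/2) * (1 / (z - u))).re ∂μ := (integral_re hint2).symm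
    rw [this]
    have h3 : ∫ u : ℝ, (‖z - 1/2‖ * (‖z - 1/2‖ - 1/2) / (‖z - 1/2‖ + 1/2)^2) ∂μ ≤
        ∫ u : ℝ, ((z - 1/2) * (1 / (z - u))).re ∂μ := by
      apply integral_mono_ae (integrable_const _) hint2.re
      filter_upwards [hμ] with u hu
      exact re_low hz hu
    simpa using h3
  have h2 := h1.trans (Complex.re_le_norm _)
  rw [norm_mul, mul_div_assoc] at h2
  exact le_of_mul_le_mul_left h2 (by linarith)

lemma g_ne (hμ : ∀ᵐ u ∂μ, u ∈ Set.Icc (0:ℝ) 1) {z : ℂ} (hz : 1/2 < ‖z - 1/2‖) :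
    ∫ u : ℝ, 1 / (z - u) ∂μ ≠ 0 := by
  have := g_low hμ hz
  have h2 : 0 < (‖z - 1/2‖ - 1/2) / (‖z - 1/2‖ + 1/2)^2 := by
    apply div_pos <;> [linarith; positivity]
  rw [← norm_pos_iff]; linarith

lemma z_ne {z : ℂ} (hz : 1/2 < ‖z - 1/2‖) : z ≠ 0 := by
  have := norm_low z
  rw [← norm_pos_iff]; linarith

lemma diff_cauchy (hμ : ∀ᵐ u ∂μ, u ∈ Set.Icc (0:ℝ) 1) {φ : ℝ → ℂ} (hφ : Measurable φ)
    (hb : ∀ u ∈ Set.Icc (0:ℝ) 1, ‖φ u‖ ≤ 1) {z : ℂ} (hz : 1/2 < ‖z - 1/2‖) :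
    DifferentiableAt ℂ (fun w : ℂ => ∫ u : ℝ, φ u / (w - u) ∂μ) z := by
  obtain ⟨m, hm1, hm2⟩ := exists_between hz
  have hs : {w : ℂ | m < ‖w - 1/2‖} ∈ nhds z :=
    (isOpen_lt continuous_const (by fun_prop)).mem_nhds hm2
  refine (hasDerivAt_integral_of_dominated_loc_of_deriv_le (F := fun (w : ℂ) (u : ℝ) => φ u / (w - u))
    (F' := fun (w : ℂ) (u : ℝ) => - φ u / (w - u)^2)
    (bound := fun _ => 1 / (m - 1/2)^2) hs ?_ (integrable_cauchy hμ hφ hb hz) ?_ ?_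
    (integrable_const _) ?_).2.differentiableAt
  · exact Filter.Eventually.of_forall fun w =>
      (by fun_prop : Measurable (fun u : ℝ => φ u / (w - u))).aestronglyMeasurable
  · exact (by fun_prop : Measurable (fun u : ℝ => - φ u / (z - u)^2)).aestronglyMeasurable
  · filter_upwards [hμ] with u hu w hw
    have hw : m < ‖w - 1/2‖ := hw
    have := dist_low (z := w) hu
    rw [norm_div, norm_neg, norm_pow]
    have h0 : 0 < m - 1/2 := by linarith
    apply div_le_div₀ zero_le_one (hb u hu) (by positivity)
    gcongr
    linarith
  · filter_upwards [hμ] with u hu w hw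
    have hw : m < ‖w - 1/2‖ := hw
    have hne : w - u ≠ 0 := sub_ne (by linarith) hu
    have h := (((hasDerivAt_id w).sub_const (u:ℂ)).inv hne).const_mul (φ u)
    have h' : HasDerivAt (fun w : ℂ => φ u * (w - u)⁻¹) (φ u * (-1 / (w - u)^2)) w := h
    simp only [div_eq_mul_inv] at h' ⊢
    refine h'.congr_deriv ?_
    ring

lemma diff_g (hμ : ∀ᵐ u ∂μ, u ∈ Set.Icc (0:ℝ) 1) {z : ℂ} (hz : 1/2 < ‖z - 1/2‖) :
    DifferentiableAt ℂ (fun w : ℂ => ∫ u : ℝ, 1 / (w - u) ∂μ) z :=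
  diff_cauchy hμ (φ := fun _ => 1) measurable_const (by simp) hz

/-- Residue at an exterior point. -/
lemma residue (hμ : ∀ᵐ u ∂μ, u ∈ Set.Icc (0:ℝ) 1) {r : ℝ} (hr : 1/2 < r) {p : ℂ}
    (hp : r < ‖p - 1/2‖) {x : ℝ} (hx : x ∈ Set.Icc (0:ℝ) 1) :
    ∮ z in C((1:ℂ)/2, r), 1 / (z * (∫ u : ℝ, 1 / (z - u) ∂μ) * (z - x)) * (1 / (z - p)) =
      - (2 * Real.pi * Complex.I) * (1 / (p * (∫ u : ℝ, 1 / (p - u) ∂μ) * (p - x))) := by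
  set H : ℂ → ℂ := fun z => 1 / (z * (∫ u : ℝ, 1 / (z - u) ∂μ) * (z - x)) with hH
  have hHd : ∀ z : ℂ, 1/2 < ‖z - 1/2‖ → DifferentiableAt ℂ H z := by
    intro z hz
    refine (differentiableAt_const _).div ((differentiableAt_id.mul (diff_g hμ hz)).mul
      (differentiableAt_id.sub_const _)) ?_
    exact mul_ne_zero (mul_ne_zero (z_ne hz) (g_ne hμ hz)) (sub_ne hz hx)
  have hpz : 1/2 < ‖p - 1/2‖ := by linarith
  -- the key identity for each large radius
  have key : ∀ R : ℝ, ‖p - 1/2‖ < R →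
      ∮ z in C((1:ℂ)/2, r), H z * (1 / (z - p)) =
        (∮ z in C((1:ℂ)/2, R), H z * (1 / (z - p))) - 2 * Real.pi * Complex.I * H p := by
    intro R hR
    have hann : ∮ z in C((1:ℂ)/2, R), dslope H p z = ∮ z in C((1:ℂ)/2, r), dslope H p z := by
      refine Complex.circleIntegral_eq_of_differentiable_on_annulus_off_countable (by linarith)
        (by linarith) (Set.countable_singleton p) ?_ ?_
      · intro z hz
        have hz' : 1/2 < ‖z - 1/2‖ := by
          have := hz.2
          rw [Metric.mem_ball, not_lt, dist_eq_norm] at this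
          linarith
        apply ContinuousAt.continuousWithinAt
        by_cases hzp : z = p
        · subst hzp
          exact continuousAt_dslope_same.2 (hHd _ hz')
        · exact (continuousAt_dslope_of_ne hzp).2 (hHd z hz').continuousAt
      · rintro z ⟨hz, hzp⟩
        have hz' : 1/2 < ‖z - 1/2‖ := by
          have := hz.2
          rw [Metric.mem_closedBall, not_le, dist_eq_norm] at this
          linarith
        exact (differentiableAt_dslope_of_ne (by simpa using hzp)).2 (hHd z hz')
    have hsplit : ∀ ρ : ℝ, 1/2 < ρ → ρ ≠ ‖p - 1/2‖ → ∮ z in C((1:ℂ)/2, ρ), dslope H p z =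
        (∮ z in C((1:ℂ)/2, ρ), H z * (1 / (z - p))) - H p * ∮ z in C((1:ℂ)/2, ρ), (z - p)⁻¹ := by
      intro ρ hρ hρp
      have hne : ∀ z ∈ Metric.sphere ((1:ℂ)/2) ρ, z - p ≠ 0 := by
        intro z hz h
        rw [mem_sphere_iff_norm] at hz
        rw [sub_eq_zero.1 h] at hz
        exact hρp hz.symm
      rw [← smul_eq_mul (H p), ← circleIntegral.integral_smul, ← circleIntegral.integral_sub]
      · apply circleIntegral.integral_congr (by linarith)
        intro z hz
        have := hne z hz
        simp only [smul_eq_mul]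
        rw [dslope_of_ne _ (sub_ne_zero.1 this), slope_def_field]
        field_simp
      · apply ContinuousOn.circleIntegrable (by linarith)
        intro z hz
        have h1 := hne z hz
        rw [mem_sphere_iff_norm] at hz
        have h2 := (hHd z (by linarith)).continuousAt
        apply ContinuousAt.continuousWithinAt
        exact h2.mul (continuousAt_const.div (by fun_prop) h1)
      · apply ContinuousOn.circleIntegrable (by linarith)
        intro z hz
        have h1 := hne z hz
        apply ContinuousAt.continuousWithinAt
        have h2 : ContinuousAt (fun z : ℂ => (z - p)⁻¹) z :=
          ContinuousAt.inv₀ (f := fun z : ℂ => z - p) (by fun_prop) h1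
        exact h2.const_smul (H p)
    rw [hsplit R (by linarith) hR.ne', hsplit r hr hp.ne,
      circleIntegral.integral_sub_inv_of_mem_ball (by rw [Metric.mem_ball, dist_eq_norm]; exact hR)] at hann
    have hz0 : ∮ z in C((1:ℂ)/2, r), (z - p)⁻¹ = 0 := by
      have hne : ∀ z ∈ Metric.closedBall ((1:ℂ)/2) r, z - p ≠ 0 := by
        intro z hz h
        rw [mem_closedBall_iff_norm, sub_eq_zero.1 h] at hz
        linarith
      refine Complex.circleIntegral_eq_zero_of_differentiable_on_off_countable (by linarith)
        Set.countable_empty ?_ ?_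
      · intro z hz
        exact (ContinuousAt.inv₀ (f := fun z : ℂ => z - p) (by fun_prop) (hne z hz)).continuousWithinAt
      · intro z hz
        have := hne z (Metric.ball_subset_closedBall hz.1)
        fun_prop (disch := assumption)
    rw [hz0, mul_zero, sub_zero] at hann
    rw [← hann]; ring
  have hlim : Filter.Tendsto (fun R : ℝ => ∮ z in C((1:ℂ)/2, R), H z * (1 / (z - p)))
      Filter.atTop (nhds 0) := by
    refine squeeze_zero_norm' (a := fun R => (2 * Real.pi * 16) * R⁻¹) ?_ ?_
    · filter_upwards [Filter.eventually_ge_atTop (2 * ‖p - 1/2‖ + 2)] with R hR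
      have hp0 := norm_nonneg (p - 1/2)
      have hR0 : 0 < R := by linarith
      have := circleIntegral.norm_integral_le_of_norm_le_const (f := fun z => H z * (1 / (z - p)))
        (c := 1/2) (R := R) (C := 16 / R^2) hR0.le ?_
      · refine this.trans (le_of_eq ?_)
        field_simp
      · intro z hz
        rw [mem_sphere_iff_norm] at hz
        have h1 := g_low hμ (z := z) (by linarith)
        have h2 := norm_low z
        have h3 := dist_low (z := z) hx
        rw [hz] at h1 h2 h3
        have h4 : R / 2 ≤ ‖z - p‖ := by
          have := norm_sub_norm_le (z - 1/2) (p - 1/2)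
          rw [hz, sub_sub_sub_cancel_right] at this
          linarith
        have h5 : (1/4 : ℝ) ≤ ‖z‖ * ‖∫ u : ℝ, 1 / (z - u) ∂μ‖ := by
          calc (1/4:ℝ) ≤ (R - 1/2) * ((R - 1/2) / (R + 1/2)^2) := by
                rw [← mul_div_assoc, le_div_iff₀ (by positivity)]
                nlinarith
            _ ≤ _ := by
                apply mul_le_mul h2 h1 _ (norm_nonneg _)
                apply div_nonneg <;> [linarith; positivity]
        have h6 : R / 2 ≤ ‖z - x‖ := by linarith
        simp only [hH, norm_mul, norm_div, norm_one]
        rw [one_div_mul_one_div]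
        calc _ ≤ 1 / (1/4 * (R/2) * (R/2)) := by
              apply one_div_le_one_div_of_le (by positivity)
              gcongr
          _ = 16 / R^2 := by field_simp; norm_num
    · simpa using tendsto_inv_atTop_zero.const_mul (2 * Real.pi * 16)
  have hconst : Filter.Tendsto (fun R : ℝ => ∮ z in C((1:ℂ)/2, R), H z * (1 / (z - p)))
      Filter.atTop (nhds ((∮ z in C((1:ℂ)/2, r), H z * (1 / (z - p))) +
        2 * Real.pi * Complex.I * H p)) := by
    refine tendsto_const_nhds.congr' ?_
    filter_upwards [Filter.eventually_gt_atTop ‖p - 1/2‖] with R hR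
    rw [key R hR]; ring
  have := tendsto_nhds_unique hconst hlim
  rw [eq_neg_of_add_eq_zero_left this]; ring

lemma shift (hμ : ∀ᵐ u ∂μ, u ∈ Set.Icc (0:ℝ) 1) {r : ℝ} (hr : 1/2 < r) (hr1 : r ≤ 1)
    {t : ℝ} (ht : 0 ≤ t) (s : ℝ) :
    (∮ z in C((1 : ℂ)/2, 1), (Complex.exp (-(s * z)) / z) *
      ((∫ u : ℝ, Complex.exp (-(u * t)) / (z - u) ∂μ) / (∫ u : ℝ, 1 / (z - u) ∂μ))) =
    ∮ z in C((1 : ℂ)/2, r), (Complex.exp (-(s * z)) / z) *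
      ((∫ u : ℝ, Complex.exp (-(u * t)) / (z - u) ∂μ) / (∫ u : ℝ, 1 / (z - u) ∂μ)) := by
  have hd : ∀ z : ℂ, 1/2 < ‖z - 1/2‖ → DifferentiableAt ℂ (fun z : ℂ =>
      (Complex.exp (-(s * z)) / z) *
      ((∫ u : ℝ, Complex.exp (-(u * t)) / (z - u) ∂μ) / (∫ u : ℝ, 1 / (z - u) ∂μ))) z := by
    intro z hz
    refine DifferentiableAt.mul (DifferentiableAt.div (by fun_prop) (by fun_prop) (z_ne hz)) ?_
    refine DifferentiableAt.div ?_ (diff_g hμ hz) (g_ne hμ hz)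
    refine diff_cauchy hμ (φ := fun u : ℝ => Complex.exp (-(u * t))) (by fun_prop) ?_ hz
    intro u hu
    rw [Complex.norm_exp, Real.exp_le_one_iff]
    simp
    exact mul_nonneg hu.1 ht
  refine Complex.circleIntegral_eq_of_differentiable_on_annulus_off_countable (by linarith)
        hr1 Set.countable_empty ?_ ?_
  · intro z hz
    have := hz.2
    rw [Metric.mem_ball, not_lt, dist_eq_norm] at this
    exact (hd z (by linarith)).continuousAt.continuousWithinAt
  · rintro z ⟨hz, -⟩
    have := hz.2
    rw [Metric.mem_closedBall, not_le, dist_eq_norm] at this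
    exact hd z (by linarith)

theorem main (hμ : ∀ᵐ u ∂μ, u ∈ Set.Icc (0:ℝ) 1) {θ : ℝ} (hθ : 0 < θ) {ω : ℂ} (hω : 0 < ω.re) :
    ∫ s in Set.Ioi (0 : ℝ), Complex.exp (-(ω * s)) * ((1 / (2 * Real.pi * Complex.I)) *
      ∮ z in C((1 : ℂ)/2, 1), (Complex.exp (-(s * z)) / z) *
      ((∫ u : ℝ, Complex.exp (-(u * (θ * s : ℝ))) / (z - u) ∂μ) / (∫ u : ℝ, 1 / (z - u) ∂μ))) =
    ∫ x : ℝ, ((ω + x * θ + x) * ∫ y : ℝ, (ω + x * θ) / (ω + x * θ + y) ∂μ)⁻¹ ∂μ := by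
  obtain ⟨r, hr, hr1, hrω⟩ : ∃ r : ℝ, 1/2 < r ∧ r ≤ 1 ∧ r - 1/2 < ω.re := by
    refine ⟨min 1 (1/2 + ω.re / 2), ?_, min_le_left _ _, ?_⟩
    · rw [lt_min_iff]; constructor <;> linarith
    · have := min_le_right 1 (1/2 + ω.re / 2); linarith
  have hr0 : 0 < r := by linarith
  set g : ℂ → ℂ := fun z => ∫ u : ℝ, 1 / (z - u) ∂μ with hg
  set c : ℝ → ℂ := circleMap (1/2) r with hc
  have hcn : ∀ τ, ‖c τ - 1/2‖ = r := by
    intro τ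
    have := circleMap_mem_sphere ((1:ℂ)/2) hr0.le τ
    rwa [mem_sphere_iff_norm] at this
  have hcz : ∀ τ, 1/2 < ‖c τ - 1/2‖ := by intro τ; rw [hcn]; exact hr
  have hcre : ∀ τ, 1/2 - r ≤ (c τ).re := by
    intro τ
    have h := Complex.abs_re_le_norm (c τ - 1/2)
    rw [hcn] at h
    have := (abs_le.1 h).1
    simp at this
    linarith
  have hcm : Measurable c := (continuous_circleMap _ _).measurable
  have hgm : Measurable g := by
    refine (StronglyMeasurable.integral_prod_right (f := fun (z : ℂ) (u : ℝ) => 1 / (z - u)) ?_).measurable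
    exact (by unfold Function.uncurry; fun_prop :
      Measurable (Function.uncurry fun (z : ℂ) (u : ℝ) => 1 / (z - u))).stronglyMeasurable
  set B : ℝ × ℝ → ℂ := fun q => deriv c q.1 * (1 / (c q.1 * g (c q.1) * (c q.1 - q.2))) with hB
  have hBm : Measurable B := by
    have : deriv c = fun τ => circleMap 0 r τ * Complex.I := by
      ext τ; rw [hc, deriv_circleMap]
    simp only [hB, this]
    have h2 : Measurable (circleMap 0 r) := (continuous_circleMap _ _).measurable
    fun_prop
  set M : ℝ := r * (1 / ((r - 1/2) * ((r - 1/2) / (r + 1/2)^2) * (r - 1/2))) with hM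
  have hBb : ∀ q : ℝ × ℝ, q.2 ∈ Set.Icc (0:ℝ) 1 → ‖B q‖ ≤ M := by
    rintro ⟨τ, x⟩ hx
    have h1 := g_low hμ (hcz τ)
    have h2 := norm_low (c τ)
    have h3 := dist_low (z := c τ) hx
    rw [hcn] at h1 h2 h3
    have h0 : 0 < r - 1/2 := by linarith
    have h4 : ‖deriv c τ‖ = r := by
      rw [hc, deriv_circleMap]; simp [abs_of_pos hr0]
    simp only [hB, hM, norm_mul, norm_div, norm_one, h4]
    gcongr
  set T : Measure ℝ := volume.restrict (Set.Ioc 0 (2 * Real.pi)) with hT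
  set S : Measure ℝ := volume.restrict (Set.Ioi (0:ℝ)) with hS
  set K : ℝ → ℝ × ℝ → ℂ := fun s q => Complex.exp (-(ω + c q.1 + q.2 * θ) * s) * B q with hK
  have hKm : Measurable (Function.uncurry K) := by
    unfold Function.uncurry; simp only [hK]; fun_prop
  have hxae : ∀ᵐ q ∂(T.prod μ), q.2 ∈ Set.Icc (0:ℝ) 1 :=
    Measure.quasiMeasurePreserving_snd.ae hμ
  have hKb : ∀ s : ℝ, 0 < s → ∀ q : ℝ × ℝ, q.2 ∈ Set.Icc (0:ℝ) 1 →
      ‖K s q‖ ≤ Real.exp (-(ω.re - (r - 1/2)) * s) * M := by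
    intro s hs q hq
    simp only [hK, norm_mul]
    refine mul_le_mul ?_ (hBb q hq) (norm_nonneg _) (Real.exp_pos _).le
    rw [Complex.norm_exp, Real.exp_le_exp]
    have h1 := hcre q.1
    have h2 : 0 ≤ q.2 * θ := mul_nonneg hq.1 hθ.le
    have h3 : (-(ω + c q.1 + q.2 * θ) * s).re = -(ω.re + (c q.1).re + q.2 * θ) * s := by
      simp
    rw [h3]
    apply mul_le_mul_of_nonneg_right _ hs.le
    linarith
  have hKint : Integrable (Function.uncurry K) (S.prod (T.prod μ)) := by
    have hexp : Integrable (fun s : ℝ => Real.exp (-(ω.re - (r - 1/2)) * s)) S :=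
      exp_neg_integrableOn_Ioi 0 (by linarith)
    have hdom : Integrable (fun z : ℝ × (ℝ × ℝ) => Real.exp (-(ω.re - (r - 1/2)) * z.1) * M)
        (S.prod (T.prod μ)) := hexp.mul_prod (integrable_const M)
    refine hdom.mono' hKm.aestronglyMeasurable ?_
    have h1 : ∀ᵐ z ∂(S.prod (T.prod μ)), z.1 ∈ Set.Ioi (0:ℝ) :=
      Measure.quasiMeasurePreserving_fst.ae (ae_restrict_mem measurableSet_Ioi)
    have h2 : ∀ᵐ z ∂(S.prod (T.prod μ)), z.2.2 ∈ Set.Icc (0:ℝ) 1 :=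
      Measure.quasiMeasurePreserving_snd.ae hxae
    filter_upwards [h1, h2] with z hz1 hz2
    exact hKb z.1 hz1 z.2 hz2
  -- step 1
  have step1 : ∀ s ∈ Set.Ioi (0:ℝ), Complex.exp (-(ω * s)) * ((1 / (2 * Real.pi * Complex.I)) *
      ∮ z in C((1 : ℂ)/2, 1), (Complex.exp (-(s * z)) / z) *
      ((∫ u : ℝ, Complex.exp (-(u * (θ * s : ℝ))) / (z - u) ∂μ) / (∫ u : ℝ, 1 / (z - u) ∂μ))) =
      (1 / (2 * Real.pi * Complex.I)) * ∫ q, K s q ∂(T.prod μ) := by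
    intro s hs
    have hs : 0 < s := hs
    rw [shift hμ hr hr1 (mul_nonneg hθ.le hs.le), integral_prod, mul_left_comm, circleIntegral,
      intervalIntegral.integral_of_le (by positivity), ← integral_const_mul]
    · congr 1
      apply integral_congr_ae
      refine Filter.Eventually.of_forall fun τ => ?_
      change Complex.exp (-(ω * s)) * (deriv c τ • ((Complex.exp (-(s * c τ)) / c τ) *
        ((∫ u : ℝ, Complex.exp (-(u * (θ * s : ℝ))) / (c τ - u) ∂μ) / g (c τ)))) =
        ∫ x : ℝ, K s (τ, x) ∂μ
      rw [smul_eq_mul]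
      have : ∀ x : ℝ, K s (τ, x) = (Complex.exp (-(ω * s)) * deriv c τ * Complex.exp (-(s * c τ)) /
          c τ / g (c τ)) * (Complex.exp (-(x * (θ * s : ℝ))) / (c τ - x)) := by
        intro x
        simp only [hK, hB]
        have : -(ω + c τ + x * θ) * s = -(ω * s) + -(s * c τ) + -(x * (θ * s : ℝ)) := by
          push_cast; ring
        rw [this, Complex.exp_add, Complex.exp_add]
        simp only [div_eq_mul_inv, mul_inv, one_mul]
        ring
      simp_rw [this]
      rw [integral_const_mul]
      simp only [div_eq_mul_inv]
      ring
    · refine Integrable.of_bound (C := Real.exp (-(ω.re - (r - 1/2)) * s) * M) ?_ ?_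
      · exact (hKm.comp (measurable_const.prodMk measurable_id :
          Measurable fun q : ℝ × ℝ => (s, q))).aestronglyMeasurable
      · filter_upwards [hxae] with q hq using hKb s hs q hq
  rw [setIntegral_congr_fun measurableSet_Ioi step1, integral_const_mul,
    integral_integral_swap hKint, integral_prod_symm (fun q => ∫ s, K s q ∂S) hKint.integral_prod_right,
    ← integral_const_mul]
  apply integral_congr_ae
  filter_upwards [hμ] with x hx
  set p : ℂ := -(ω + x * θ) with hp
  have hxθ : 0 ≤ x * θ := mul_nonneg hx.1 hθ.le
  have hpre : p.re = -(ω.re + x * θ) := by simp [hp]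
  have hpr : r < ‖p - 1/2‖ := by
    have h := Complex.abs_re_le_norm (p - 1/2)
    have h2 := neg_le_abs (p - 1/2).re
    have h3 : (p - 1/2).re = -(ω.re + x * θ) - 1/2 := by rw [Complex.sub_re, hpre]; simp
    linarith
  have hlap : ∀ τ : ℝ, ∫ s, K s (τ, x) ∂S = deriv c τ • (1 / (c τ * g (c τ) * (c τ - x)) *
      (1 / (c τ - p))) := by
    intro τ
    simp only [hK]
    rw [integral_mul_const, hS, integral_exp_mul_complex_Ioi]
    · simp only [hB, smul_eq_mul]
      have : -(ω + c τ + x * θ) = -(c τ - p) := by rw [hp]; ring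
      rw [this, Complex.ofReal_zero, mul_zero, Complex.exp_zero, neg_div_neg_eq]
      ring
    · have := hcre τ
      simp
      linarith
  simp_rw [hlap]
  have hres := residue hμ hr hpr hx
  rw [circleIntegral, intervalIntegral.integral_of_le (by positivity)] at hres
  change ∫ τ, deriv c τ • (1 / (c τ * g (c τ) * (c τ - x)) * (1 / (c τ - p))) ∂T = _ at hres
  rw [hres]
  have hfin : ∫ y : ℝ, (ω + x * θ) / (ω + x * θ + y) ∂μ = p * ∫ u : ℝ, 1 / (p - u) ∂μ := by
    rw [← integral_const_mul]
    congr 1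
    ext y
    have h1 : ω + x * θ + y = -(p - y) := by rw [hp]; ring
    have h2 : ω + x * θ = -p := by rw [hp]; ring
    rw [h1, h2, neg_div_neg_eq]; ring
  rw [hfin]
  have hx2 : ω + x * θ + x = -(p - x) := by rw [hp]; ring
  rw [hx2]
  have h2pi : (2 * Real.pi * Complex.I : ℂ) ≠ 0 := Complex.two_pi_I_ne_zero
  rw [← mul_assoc, mul_neg, one_div_mul_cancel h2pi, neg_mul, mul_inv, inv_neg, one_div,
    mul_inv (p * _)]
  ring

end RemTrap

/-- For every `θ > 0` and every `ω ∈ ℂ` with `Re ω > 0`, the Laplace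
transform of `s ↦ Π(θ s, s)` equals
`Π̂(θ, ω) = ∫_0^1 α x^(α-1) [ (ω + xθ + x) ∫_0^1 (ω + xθ)/(ω + xθ + y) α y^(α-1) dy ]⁻¹ dx`,
where `Π(t, t_w)` is the limiting correlation function given by the contour integral
`(1/(2πi)) ∮_γ (e^{-t_w λ}/λ) [∫_0^1 e^{-xt}/(λ-x) α x^(α-1) dx] /
[∫_0^1 1/(λ-x) α x^(α-1) dx] dλ` over a positively oriented loop `γ` around `[0,1]`
(here, the circle of center `1/2` and radius `1`). -/
theorem rem_trap_laplace_transform_of_correlation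
    (α : ℝ) (hα0 : 0 < α) (hα1 : α < 1)
    (Pi_ : ℝ → ℝ → ℂ)
    (hPi : ∀ t t_w : ℝ, Pi_ t t_w =
      (1 / (2 * Real.pi * Complex.I)) *
        ∮ z in C((1 : ℂ)/2, 1),
          (Complex.exp (-(t_w * z)) / z) *
            ((∫ u in (0:ℝ)..1,
                Complex.exp (-(u * t)) / (z - u) * ((α * u ^ (α - 1) : ℝ) : ℂ)) /
             (∫ u in (0:ℝ)..1,
                (1 / (z - u)) * ((α * u ^ (α - 1) : ℝ) : ℂ)))) :
    ∀ θ : ℝ, 0 < θ → ∀ ω : ℂ, 0 < ω.re →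
      ∫ s in Set.Ioi (0 : ℝ), Complex.exp (-(ω * s)) * Pi_ (θ * s) s =
        ∫ x in (0:ℝ)..1, ((α * x ^ (α - 1) : ℝ) : ℂ) *
          ((ω + x * θ + x) *
            ∫ y in (0:ℝ)..1,
              ((ω + x * θ) / (ω + x * θ + y)) * ((α * y ^ (α - 1) : ℝ) : ℂ))⁻¹ := by
  intro θ hθ ω hω
  set μ : Measure ℝ := (volume.restrict (Set.Ioc (0:ℝ) 1)).withDensity
    (fun u => ENNReal.ofReal (α * u ^ (α - 1))) with hμdef
  have hmeas : Measurable (fun u : ℝ => ENNReal.ofReal (α * u ^ (α - 1))) := by fun_prop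
  have hμ : ∀ᵐ u ∂μ, u ∈ Set.Icc (0:ℝ) 1 := by
    refine (withDensity_absolutelyContinuous _ _).ae_le ?_
    filter_upwards [ae_restrict_mem measurableSet_Ioc] with u hu
    exact ⟨hu.1.le, hu.2⟩
  have hconv : ∀ f : ℝ → ℂ, ∫ u in (0:ℝ)..1, f u * ((α * u ^ (α - 1) : ℝ) : ℂ) = ∫ u, f u ∂μ := by
    intro f
    rw [hμdef, integral_withDensity_eq_integral_toReal_smul hmeas
      (Filter.Eventually.of_forall fun _ => ENNReal.ofReal_lt_top),
      intervalIntegral.integral_of_le zero_le_one]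
    apply setIntegral_congr_fun measurableSet_Ioc
    intro u hu
    have h0 : 0 ≤ α * u ^ (α - 1) := mul_nonneg hα0.le (Real.rpow_nonneg hu.1.le _)
    simp only [ENNReal.toReal_ofReal h0, Complex.real_smul]
    rw [mul_comm]
  have hprob : IsProbabilityMeasure μ := by
    constructor
    rw [hμdef, withDensity_apply _ MeasurableSet.univ, Measure.restrict_univ,
      ← ofReal_integral_eq_lintegral_ofReal, ← intervalIntegral.integral_of_le zero_le_one,
      intervalIntegral.integral_const_mul, integral_rpow (Or.inl (by linarith))]
    · simp [hα0.ne']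
    · have h := (intervalIntegral.intervalIntegrable_rpow' (a := 0) (b := 1)
        (r := α - 1) (by linarith)).const_mul α
      rwa [intervalIntegrable_iff_integrableOn_Ioc_of_le zero_le_one] at h
    · filter_upwards [ae_restrict_mem measurableSet_Ioc] with u hu
      exact mul_nonneg hα0.le (Real.rpow_nonneg hu.1.le _)
  have hmain := RemTrap.main hμ hθ hω
  simp_rw [mul_comm (((α * _ ^ (α - 1) : ℝ) : ℂ))]
  simp_rw [hPi, hconv]
  exact hmain
end

section
/- Let Z be a nonnegative random variable whose Laplace transform satisfies E(e^{−θZ}) = f(θ) for all θ > 0. Then the distribution function F(z) := P(Z ≤ z) is continuous on ℝ, and there exists a constant c′ > 0 such that F(z) − F(x) ≤ c′·(z^α − x^α) for all 0 < x < z. -/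
open MeasureTheory ProbabilityTheory

lemma aux_finite_unique (μ ν : Measure ℝ) [IsFiniteMeasure μ] [IsFiniteMeasure ν]
    (hμ : ∀ t : ℝ, t < 1 → Integrable (fun x => Real.exp (t * x)) μ)
    (hν : ∀ t : ℝ, t < 1 → Integrable (fun x => Real.exp (t * x)) ν)
    (h : ∀ t : ℝ, t < 1 → ∫ x, Real.exp (t * x) ∂μ = ∫ x, Real.exp (t * x) ∂ν) : μ = ν := by
  have iμ : Set.Iio (1:ℝ) ⊆ interior (integrableExpSet id μ) :=
    interior_maximal (fun t ht => hμ t ht) isOpen_Iio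
  have iν : Set.Iio (1:ℝ) ⊆ interior (integrableExpSet id ν) :=
    interior_maximal (fun t ht => hν t ht) isOpen_Iio
  have hX : AnalyticOnNhd ℂ (complexMGF id μ) {z | z.re ∈ Set.Iio (1:ℝ)} :=
    fun z hz => analyticOnNhd_complexMGF z (iμ hz)
  have hY : AnalyticOnNhd ℂ (complexMGF id ν) {z | z.re ∈ Set.Iio (1:ℝ)} :=
    fun z hz => analyticOnNhd_complexMGF z (iν hz)
  have key : Set.EqOn (complexMGF id μ) (complexMGF id ν) {z | z.re ∈ Set.Iio (1:ℝ)} := by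
    refine AnalyticOnNhd.eqOn_of_preconnected_of_frequently_eq hX hY
      ((convex_Iio (1:ℝ)).linear_preimage Complex.reLm).isPreconnected
      (z₀ := ((0:ℝ) : ℂ)) (by simp) ?_
    have h_real : ∃ᶠ (x : ℝ) in nhdsWithin 0 {0}ᶜ, complexMGF id μ x = complexMGF id ν x := by
      have : ∀ᶠ (x : ℝ) in nhdsWithin 0 {0}ᶜ, complexMGF id μ x = complexMGF id ν x := by
        filter_upwards [nhdsWithin_le_nhds (Iio_mem_nhds (zero_lt_one (α := ℝ)))] with x hx
        rw [complexMGF_ofReal, complexMGF_ofReal]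
        have := h x hx
        simp only [mgf, id]
        rw [this]
      exact this.frequently
    rw [Filter.frequently_iff_seq_forall] at h_real ⊢
    obtain ⟨xs, hx_tendsto, hx_eq⟩ := h_real
    refine ⟨fun n ↦ xs n, ?_, fun n ↦ ?_⟩
    · rw [tendsto_nhdsWithin_iff] at hx_tendsto ⊢
      constructor
      · refine (Complex.continuous_ofReal.tendsto 0).comp ?_
        exact hx_tendsto.1
      · simpa using hx_tendsto.2
    · simp [hx_eq]
  apply Measure.ext_of_charFun
  ext t
  rw [← complexMGF_id_mul_I, ← complexMGF_id_mul_I]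
  exact key (by simp)

lemma aux_unique (μ ν : Measure ℝ)
    (h : ∀ θ : ℝ, 0 < θ → ∫⁻ x, ENNReal.ofReal (Real.exp (-(θ * x))) ∂μ =
      ∫⁻ x, ENNReal.ofReal (Real.exp (-(θ * x))) ∂ν)
    (hfin : ∀ θ : ℝ, 0 < θ → ∫⁻ x, ENNReal.ofReal (Real.exp (-(θ * x))) ∂μ ≠ ⊤) : μ = ν := by
  set w : ℝ → ENNReal := fun x => ENNReal.ofReal (Real.exp (-x)) with hw
  have hwm : Measurable w := by fun_prop
  have tilt : ∀ (ρ : Measure ℝ) (t : ℝ), ∫⁻ x, ENNReal.ofReal (Real.exp (t * x)) ∂(ρ.withDensity w)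
      = ∫⁻ x, ENNReal.ofReal (Real.exp (-((1 - t) * x))) ∂ρ := by
    intro ρ t
    rw [lintegral_withDensity_eq_lintegral_mul _ hwm (by fun_prop)]
    refine lintegral_congr fun x => ?_
    simp only [hw, Pi.mul_apply]
    rw [← ENNReal.ofReal_mul (Real.exp_pos _).le, ← Real.exp_add]
    congr 2; ring
  have fin : ∀ ρ : Measure ℝ, (∀ θ : ℝ, 0 < θ → ∫⁻ x, ENNReal.ofReal (Real.exp (-(θ * x))) ∂ρ ≠ ⊤) →
      IsFiniteMeasure (ρ.withDensity w) := by
    intro ρ hρ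
    refine ⟨?_⟩
    rw [withDensity_apply _ MeasurableSet.univ, Measure.restrict_univ]
    have := hρ 1 one_pos
    simp only [one_mul] at this
    exact this.lt_top
  have hfin' : ∀ θ : ℝ, 0 < θ → ∫⁻ x, ENNReal.ofReal (Real.exp (-(θ * x))) ∂ν ≠ ⊤ :=
    fun θ hθ => h θ hθ ▸ hfin θ hθ
  have integ : ∀ ρ : Measure ℝ, (∀ θ : ℝ, 0 < θ → ∫⁻ x, ENNReal.ofReal (Real.exp (-(θ * x))) ∂ρ ≠ ⊤) →
      ∀ t : ℝ, t < 1 → Integrable (fun x => Real.exp (t * x)) (ρ.withDensity w) := by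
    intro ρ hρ t ht
    rw [← lintegral_ofReal_ne_top_iff_integrable (by fun_prop)
      (Filter.Eventually.of_forall fun x => (Real.exp_pos _).le), tilt]
    exact hρ _ (by linarith)
  have := fin μ hfin
  have := fin ν hfin'
  have key : μ.withDensity w = ν.withDensity w := by
    refine aux_finite_unique _ _ (integ μ hfin) (integ ν hfin') fun t ht => ?_
    rw [integral_eq_lintegral_of_nonneg_ae
        (Filter.Eventually.of_forall fun x => (Real.exp_pos _).le) (by fun_prop),
      integral_eq_lintegral_of_nonneg_ae
        (Filter.Eventually.of_forall fun x => (Real.exp_pos _).le) (by fun_prop),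
      tilt, tilt, h _ (by linarith)]
  have inv : ∀ ρ : Measure ℝ, (ρ.withDensity w).withDensity (fun x => (w x)⁻¹) = ρ := by
    intro ρ
    refine withDensity_inv_same hwm ?_ ?_
    · exact Filter.Eventually.of_forall fun x => by simp [hw, Real.exp_pos]
    · exact Filter.Eventually.of_forall fun x => by simp [hw]
  rw [← inv μ, key, inv ν]

lemma aux_exp (a c : ℝ) (ha : 0 < a) :
    ∫⁻ x in Set.Ioi c, ENNReal.ofReal (Real.exp (-(a * x))) = ENNReal.ofReal (Real.exp (-(a * c)) / a) := by
  have h := integral_exp_mul_Ioi (a := -a) (by linarith) c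
  have hi : IntegrableOn (fun x => Real.exp (-a * x)) (Set.Ioi c) := integrableOn_exp_mul_Ioi (by linarith) c
  simp only [neg_mul] at h hi
  rw [← ofReal_integral_eq_lintegral_ofReal hi
    (Filter.Eventually.of_forall fun x => (Real.exp_pos _).le), h]
  congr 1
  rw [neg_div_neg_eq]

lemma aux_gamma (α v : ℝ) (hα : 0 < α) (hv : 0 < v) :
    ∫⁻ t in Set.Ioi (0:ℝ), ENNReal.ofReal (t ^ (α - 1) * Real.exp (-(v * t)))
      = ENNReal.ofReal (Real.Gamma α * v ^ (-α)) := by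
  have h := Real.integral_rpow_mul_exp_neg_mul_Ioi hα hv
  rw [← ofReal_integral_eq_lintegral_ofReal, h]
  · congr 1
    rw [one_div, Real.inv_rpow hv.le, Real.rpow_neg hv.le, mul_comm]
  · by_contra hc
    rw [integral_undef hc] at h
    have := mul_pos (Real.rpow_pos_of_pos (one_div_pos.2 hv) α) (Real.Gamma_pos_of_pos hα)
    linarith
  · filter_upwards [ae_restrict_mem measurableSet_Ioi] with t ht
    exact mul_nonneg (Real.rpow_nonneg (le_of_lt ht) _) (Real.exp_pos _).le

/-- kernel -/
noncomputable def kerH (α : ℝ) (r t : ℝ) : ENNReal :=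
  if 0 < t ∧ t < r then ENNReal.ofReal (t ^ (α - 1) * Real.exp (t - r)) else 0

lemma kerH_meas (α : ℝ) : Measurable (Function.uncurry (kerH α)) := by
  unfold kerH Function.uncurry
  refine Measurable.ite ?_ (by fun_prop) measurable_const
  exact (measurableSet_lt measurable_const measurable_snd).inter
    (measurableSet_lt measurable_snd measurable_fst)

noncomputable def kerK (α : ℝ) (r : ℝ) : ENNReal := ∫⁻ t, kerH α r t

lemma kerK_meas (α : ℝ) : Measurable (kerK α) := (kerH_meas α).lintegral_prod_right'

lemma kerK_nonpos (α r : ℝ) (hr : r ≤ 0) : kerK α r = 0 := by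
  unfold kerK
  have : ∀ t, kerH α r t = 0 := fun t => by
    unfold kerH; rw [if_neg]; rintro ⟨h1, h2⟩; linarith
  simp [this]

lemma kerK_le (α r : ℝ) (hα : 0 < α) (hr : 0 < r) : kerK α r ≤ ENNReal.ofReal (r ^ α / α) := by
  have h1 : ∫ t in (0:ℝ)..r, t ^ (α - 1) = r ^ α / α := by
    rw [integral_rpow (Or.inl (by linarith))]
    simp [Real.zero_rpow hα.ne']
  have hi : IntervalIntegrable (fun t : ℝ => t ^ (α - 1)) volume 0 r :=
    intervalIntegral.intervalIntegrable_rpow' (by linarith)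
  rw [intervalIntegral.integral_of_le hr.le] at h1
  rw [← h1, ofReal_integral_eq_lintegral_ofReal
    ((intervalIntegrable_iff_integrableOn_Ioc_of_le hr.le).1 hi), ← lintegral_indicator measurableSet_Ioc]
  · refine lintegral_mono fun t => ?_
    unfold kerH
    split_ifs with h
    · rw [Set.indicator_of_mem (show t ∈ Set.Ioc 0 r from ⟨h.1, h.2.le⟩)]
      refine ENNReal.ofReal_le_ofReal ?_
      refine mul_le_of_le_one_right (Real.rpow_nonneg h.1.le _) ?_
      rw [Real.exp_le_one_iff]; linarith [h.2]
    · exact zero_le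
  · filter_upwards [ae_restrict_mem measurableSet_Ioc] with t ht
    exact Real.rpow_nonneg ht.1.le _

lemma kerK_laplace (α v : ℝ) (hα : 0 < α) (hv : 0 < v) :
    ∫⁻ r, kerK α r * ENNReal.ofReal (Real.exp (-(v * r)))
      = ENNReal.ofReal (Real.Gamma α * (v ^ (-α) / (1 + v))) := by
  have hm := kerH_meas α
  calc ∫⁻ r, kerK α r * ENNReal.ofReal (Real.exp (-(v * r)))
      = ∫⁻ r, ∫⁻ t, kerH α r t * ENNReal.ofReal (Real.exp (-(v * r))) := by
        refine lintegral_congr fun r => ?_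
        rw [lintegral_mul_const' _ _ ENNReal.ofReal_ne_top]; rfl
    _ = ∫⁻ t, ∫⁻ r, kerH α r t * ENNReal.ofReal (Real.exp (-(v * r))) := by
        rw [lintegral_lintegral_swap]
        refine Measurable.aemeasurable ?_
        exact hm.mul (by fun_prop)
    _ = ∫⁻ t in Set.Ioi (0:ℝ), ENNReal.ofReal (t ^ (α - 1) * Real.exp (-(v * t))) * ENNReal.ofReal (1 / (1 + v)) := by
        rw [← lintegral_indicator measurableSet_Ioi]
        refine lintegral_congr fun t => ?_
        by_cases ht : 0 < t
        · rw [Set.indicator_of_mem (show t ∈ Set.Ioi 0 from ht)]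
          have : ∀ r, kerH α r t * ENNReal.ofReal (Real.exp (-(v * r))) =
              (Set.Ioi t).indicator (fun r => ENNReal.ofReal (t ^ (α - 1) * Real.exp t) *
                ENNReal.ofReal (Real.exp (-((1 + v) * r)))) r := by
            intro r
            unfold kerH
            by_cases h : t < r
            · rw [if_pos ⟨ht, h⟩, Set.indicator_of_mem (show r ∈ Set.Ioi t from h),
                ← ENNReal.ofReal_mul (by positivity), ← ENNReal.ofReal_mul (by positivity),
                mul_assoc, mul_assoc, ← Real.exp_add, ← Real.exp_add]
              congr 3; ring_nf
            · rw [if_neg (fun hh => h hh.2), Set.indicator_of_notMem (by simpa using h), zero_mul]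
          simp_rw [this]
          rw [lintegral_indicator measurableSet_Ioi, lintegral_const_mul' _ _ ENNReal.ofReal_ne_top,
            aux_exp _ _ (by linarith), ← ENNReal.ofReal_mul (by positivity),
            ← ENNReal.ofReal_mul (by positivity)]
          congr 1
          rw [mul_div_assoc', mul_assoc, ← Real.exp_add, mul_one_div]
          congr 3; ring_nf
        · rw [Set.indicator_of_notMem (by simpa using ht)]
          have : ∀ r, kerH α r t = 0 := fun r => by
            unfold kerH; rw [if_neg (fun hh => ht hh.1)]
          simp [this]
    _ = _ := by
        rw [lintegral_mul_const' _ _ ENNReal.ofReal_ne_top, aux_gamma α v hα hv,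
          ← ENNReal.ofReal_mul (mul_nonneg (Real.Gamma_pos_of_pos hα).le (Real.rpow_nonneg hv.le _))]
        congr 1; ring

lemma dens_laplace (α θ : ℝ) (hα : 0 < α) (hθ : 0 < θ) :
    ∫⁻ r, (kerK α r * ENNReal.ofReal (1 / r)) * ENNReal.ofReal (Real.exp (-(θ * r)))
      = ∫⁻ v in Set.Ioi θ, ENNReal.ofReal (Real.Gamma α * (v ^ (-α) / (1 + v))) := by
  have hm := kerK_meas α
  symm
  calc ∫⁻ v in Set.Ioi θ, ENNReal.ofReal (Real.Gamma α * (v ^ (-α) / (1 + v)))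
      = ∫⁻ v in Set.Ioi θ, ∫⁻ r, kerK α r * ENNReal.ofReal (Real.exp (-(v * r))) := by
        refine setLIntegral_congr_fun measurableSet_Ioi fun v hv => ?_
        exact (kerK_laplace α v hα (hθ.trans hv)).symm
    _ = ∫⁻ r, ∫⁻ v in Set.Ioi θ, kerK α r * ENNReal.ofReal (Real.exp (-(v * r))) := by
        rw [lintegral_lintegral_swap]
        refine Measurable.aemeasurable ?_
        exact (hm.comp measurable_snd).mul (by fun_prop)
    _ = _ := by
        refine lintegral_congr fun r => ?_
        by_cases hr : 0 < r
        · rw [lintegral_const_mul _ (by fun_prop), mul_assoc]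
          congr 1
          have := aux_exp r θ hr
          simp_rw [mul_comm r] at this
          rw [this, ← ENNReal.ofReal_mul (by positivity)]
          congr 1; ring
        · simp [kerK_nonpos α r (not_lt.1 hr)]

lemma subst_lemma (α θ : ℝ) (hθ : 0 < θ) :
    ∫ u in (θ / (1 + θ))..1, u ^ (-α) * (1 - u) ^ (α - 1)
      = ∫ v in Set.Ioi θ, v ^ (-α) / (1 + v) := by
  have hlt : θ / (1 + θ) < 1 := by rw [div_lt_one (by linarith)]; linarith
  rw [intervalIntegral.integral_of_le hlt.le, integral_Ioc_eq_integral_Ioo]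
  have him : (fun v : ℝ => v / (1 + v)) '' Set.Ioi θ = Set.Ioo (θ / (1 + θ)) 1 := by
    ext u
    simp only [Set.mem_image, Set.mem_Ioi, Set.mem_Ioo]
    constructor
    · rintro ⟨v, hv, rfl⟩
      refine ⟨?_, ?_⟩
      · rw [div_lt_div_iff₀ (by linarith) (by linarith)]; nlinarith
      · rw [div_lt_one (by linarith)]; linarith
    · rintro ⟨h1, h2⟩
      have h3 : 0 < 1 - u := by linarith
      refine ⟨u / (1 - u), ?_, ?_⟩
      · rw [div_lt_iff₀ (by linarith)] at h1
        rw [lt_div_iff₀ h3]; nlinarith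
      · field_simp; ring
  have hder : ∀ v ∈ Set.Ioi θ, HasDerivWithinAt (fun v : ℝ => v / (1 + v)) (1 / (1 + v) ^ 2) (Set.Ioi θ) v := by
    intro v hv
    have hv' : θ < v := hv
    have h1 : (1 + v) ≠ 0 := by linarith
    have := (hasDerivAt_id v).div ((hasDerivAt_id v).const_add 1) h1
    refine (this.congr_deriv ?_).hasDerivWithinAt
    simp
  have hinj : Set.InjOn (fun v : ℝ => v / (1 + v)) (Set.Ioi θ) := by
    intro a ha b hb hab
    have ha' : θ < a := ha
    have hb' : θ < b := hb
    simp only at hab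
    rw [div_eq_div_iff (by linarith) (by linarith)] at hab
    linarith
  rw [← him, integral_image_eq_integral_abs_deriv_smul measurableSet_Ioi hder hinj]
  refine setIntegral_congr_fun measurableSet_Ioi fun v hv => ?_
  have hv0 : 0 < v := hθ.trans hv
  have h1 : 0 < 1 + v := by linarith
  have h2 : 1 - v / (1 + v) = (1 + v)⁻¹ := by field_simp; ring
  simp only [smul_eq_mul]
  rw [h2, abs_of_pos (by positivity), Real.div_rpow hv0.le h1.le, Real.inv_rpow h1.le, Real.rpow_sub h1,
    Real.rpow_neg h1.le, Real.rpow_one]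
  have h3 : (1 + v) ^ α ≠ 0 := (Real.rpow_pos_of_pos h1 α).ne'
  field_simp

lemma integrable_lemma (α θ : ℝ) (hα : 0 < α) (hθ : 0 < θ) :
    IntegrableOn (fun v : ℝ => v ^ (-α) / (1 + v)) (Set.Ioi θ) := by
  have h := integrableOn_Ioi_rpow_of_lt (show -α - 1 < -1 by linarith) hθ
  refine h.mono' (Measurable.aestronglyMeasurable (by fun_prop)) ?_
  filter_upwards [ae_restrict_mem measurableSet_Ioi] with v hv
  have hv0 : 0 < v := hθ.trans hv
  rw [Real.norm_of_nonneg (by positivity), Real.rpow_sub hv0, Real.rpow_one]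
  gcongr
  linarith

/-- Let `Z` be a nonnegative random variable whose Laplace transform is the
ageing function `f(θ) = (sin(πα)/π) ∫_{θ/(1+θ)}^1 u^{-α}(1-u)^{α-1} du`, i.e.
`E(e^{-θ Z}) = f θ` for all `θ > 0`.  Then the distribution function `F z = P(Z ≤ z)` is
continuous on `ℝ`, and there is `c' > 0` with `F z - F x ≤ c' (z^α - x^α)` for all
`0 < x < z`. -/
theorem rem_trap_limit_law_distribution_continuous
    (α : ℝ) (hα0 : 0 < α) (hα1 : α < 1)
    {Ω : Type*} [MeasureSpace Ω] (hP : IsProbabilityMeasure (ℙ : Measure Ω))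
    (Z : Ω → ℝ) (hZmeas : Measurable Z) (hZnonneg : ∀ ω, 0 ≤ Z ω)
    (hLaplace : ∀ θ : ℝ, 0 < θ →
      ∫ ω, Real.exp (-(θ * Z ω)) ∂(ℙ : Measure Ω) =
        (Real.sin (Real.pi * α) / Real.pi) *
          ∫ u in (θ / (1 + θ))..1, u ^ (-α) * (1 - u) ^ (α - 1))
    (F : ℝ → ℝ)
    (hF : ∀ z : ℝ, F z = ((ℙ : Measure Ω) {ω : Ω | Z ω ≤ z}).toReal) :
    Continuous F ∧
    ∃ c' : ℝ, 0 < c' ∧ ∀ x z : ℝ, 0 < x → x < z →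
      F z - F x ≤ c' * (z ^ α - x ^ α) := by
  have hG := Real.Gamma_pos_of_pos hα0
  have hs : 0 < Real.sin (Real.pi * α) / Real.pi := by
    refine div_pos (Real.sin_pos_of_pos_of_lt_pi (mul_pos Real.pi_pos hα0) ?_) Real.pi_pos
    nlinarith [Real.pi_pos]
  set s := Real.sin (Real.pi * α) / Real.pi with hs_def
  set C := s / Real.Gamma α with hC
  have hCpos : 0 < C := div_pos hs hG
  set d : ℝ → ENNReal := fun r => ENNReal.ofReal C * (kerK α r * ENNReal.ofReal (1 / r)) with hd
  have hdm : Measurable d := by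
    have := kerK_meas α
    fun_prop
  set ν : Measure ℝ := volume.withDensity d with hν
  set μ : Measure ℝ := (ℙ : Measure Ω).map Z with hμ
  have : IsProbabilityMeasure μ := Measure.isProbabilityMeasure_map hZmeas.aemeasurable
  have hLμ : ∀ θ : ℝ, 0 < θ → ∫⁻ x, ENNReal.ofReal (Real.exp (-(θ * x))) ∂μ =
      ENNReal.ofReal (s * ∫ v in Set.Ioi θ, v ^ (-α) / (1 + v)) := by
    intro θ hθ
    rw [hμ, lintegral_map (by fun_prop) hZmeas, ← subst_lemma α θ hθ, ← hLaplace θ hθ,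
      ofReal_integral_eq_lintegral_ofReal]
    · refine Integrable.mono' (integrable_const (1:ℝ)) (by fun_prop) ?_
      refine Filter.Eventually.of_forall fun ω => ?_
      rw [Real.norm_of_nonneg (Real.exp_pos _).le, Real.exp_le_one_iff]
      have := mul_nonneg hθ.le (hZnonneg ω)
      linarith
    · exact Filter.Eventually.of_forall fun ω => (Real.exp_pos _).le
  have hLν : ∀ θ : ℝ, 0 < θ → ∫⁻ x, ENNReal.ofReal (Real.exp (-(θ * x))) ∂ν =
      ENNReal.ofReal (s * ∫ v in Set.Ioi θ, v ^ (-α) / (1 + v)) := by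
    intro θ hθ
    rw [hν, lintegral_withDensity_eq_lintegral_mul _ hdm (by fun_prop)]
    simp only [hd, Pi.mul_apply, mul_assoc]
    rw [lintegral_const_mul' _ _ ENNReal.ofReal_ne_top]
    simp only [← mul_assoc]
    rw [dens_laplace α θ hα0 hθ, ← ofReal_integral_eq_lintegral_ofReal,
      ← ENNReal.ofReal_mul hCpos.le, integral_const_mul, ← mul_assoc, hC, div_mul_cancel₀ _ hG.ne']
    · exact (integrable_lemma α θ hα0 hθ).const_mul _
    · filter_upwards [ae_restrict_mem measurableSet_Ioi] with v hv
      have hv0 : 0 < v := hθ.trans hv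
      exact mul_nonneg hG.le (by positivity)
  have hμν : μ = ν := aux_unique μ ν (fun θ hθ => by rw [hLμ θ hθ, hLν θ hθ])
    (fun θ hθ => by rw [hLμ θ hθ]; exact ENNReal.ofReal_ne_top)
  have hFμ : ∀ z, F z = μ.real (Set.Iic z) := by
    intro z
    rw [hF, measureReal_def, hμ, Measure.map_apply hZmeas measurableSet_Iic]
    rfl
  have hna : NullSingletonClass μ := by rw [hμν, hν]; infer_instance
  refine ⟨?_, C / α / α, by positivity, ?_⟩
  · have hFc : F = fun z => cdf μ z := funext fun z => by rw [hFμ, cdf_eq_real]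
    rw [hFc]
    refine continuous_iff_continuousAt.2 fun z => ?_
    rw [(monotone_cdf μ).continuousAt_iff_leftLim_eq_rightLim, (cdf μ).rightLim_eq]
    have h1 : μ {z} = 0 := measure_singleton z
    rw [← measure_cdf μ, StieltjesFunction.measure_singleton, ENNReal.ofReal_eq_zero] at h1
    have h2 := (monotone_cdf μ).leftLim_le (le_refl z)
    linarith
  · intro x z hx hxz
    have hz : 0 < z := hx.trans hxz
    have h1 : F z - F x = μ.real (Set.Ioc x z) := by
      rw [hFμ, hFμ, ← Set.Iic_union_Ioc_eq_Iic hxz.le, measureReal_union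
        (Set.Iic_disjoint_Ioc le_rfl) measurableSet_Ioc]
      ring
    have hp : ∫ r in x..z, r ^ (α - 1) = (z ^ α - x ^ α) / α := by
      rw [integral_rpow (Or.inl (by linarith))]
      simp
    have hnn : 0 ≤ (z ^ α - x ^ α) / α :=
      div_nonneg (sub_nonneg.2 (Real.rpow_le_rpow hx.le hxz.le hα0.le)) hα0.le
    have h2 : μ (Set.Ioc x z) ≤ ENNReal.ofReal (C / α * ((z ^ α - x ^ α) / α)) := by
      rw [hμν, hν, withDensity_apply _ measurableSet_Ioc, ← hp, ← intervalIntegral.integral_const_mul,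
        intervalIntegral.integral_of_le hxz.le, ofReal_integral_eq_lintegral_ofReal]
      · refine setLIntegral_mono (by fun_prop) fun r hr => ?_
        have hr0 : 0 < r := hx.trans hr.1
        simp only [hd]
        calc _ ≤ ENNReal.ofReal C * (ENNReal.ofReal (r ^ α / α) * ENNReal.ofReal (1 / r)) := by
              gcongr; exact kerK_le α r hα0 hr0
          _ = _ := by
              rw [← ENNReal.ofReal_mul (by positivity), ← ENNReal.ofReal_mul (by positivity),
                Real.rpow_sub hr0, Real.rpow_one]
              congr 1; field_simp
      · have : IntervalIntegrable (fun t : ℝ => t ^ (α - 1)) volume x z :=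
          intervalIntegral.intervalIntegrable_rpow' (by linarith)
        exact ((intervalIntegrable_iff_integrableOn_Ioc_of_le hxz.le).1 this).const_mul _
      · filter_upwards [ae_restrict_mem measurableSet_Ioc] with r hr
        have hr0 : 0 < r := hx.trans hr.1
        simp only [Pi.zero_apply]
        positivity
    rw [h1, measureReal_def]
    refine (ENNReal.toReal_mono ENNReal.ofReal_ne_top h2).trans ?_
    rw [ENNReal.toReal_ofReal (by positivity)]
    apply le_of_eq; ring
end
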